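/- arXiv:2505.22772 — 5 statements merged into one kernel-verified Lean document; each statement's English description precedes it below -/
import Mathlib

section
/- Let X be a finite type, p a probability mass function on X, f : X → ℝ, and k ≥ 1 an integer, and define g(ξ) = ∑_x p(x)·(E_ξ[f] − f(x))² + (1/k)·Var_ξ(f). Assume there is no x ∈ X with f(x) = E_p[f]. Let p* be a probability mass function with E_{p*}[f] = E_p[f], and let q be a probability mass function with Var_q(f) = 0 (for instance a Dirac mass at some y ∈ X) such that (E_q[f] − E_p[f])² < (1/k)·Var_{p*}(f). Then g(q) < g(p*) and E_q[f] ≠ E_p[f]. -/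
open Finset

/-- `IsPMF μ` says `μ` is a probability mass function on the finite type `X`. -/
def IsPMF {X : Type*} [Fintype X] (μ : X → ℝ) : Prop :=
  (∀ x, 0 ≤ μ x) ∧ ∑ x, μ x = 1

/-- Expectation of `f` under the probability mass function `μ`. -/
noncomputable def pmfExp {X : Type*} [Fintype X] (μ f : X → ℝ) : ℝ :=
  ∑ x, μ x * f x

/-- Variance of `f` under the probability mass function `μ`. -/
noncomputable def pmfVar {X : Type*} [Fintype X] (μ f : X → ℝ) : ℝ :=
  ∑ x, μ x * (f x - pmfExp μ f) ^ 2

/-- `g(ξ) = ∑_x p(x)·(E_ξ[f] − f(x))² + (1/k)·Var_ξ(f)`. -/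
noncomputable def gLoss {X : Type*} [Fintype X] (p f : X → ℝ) (k : ℕ) (ξ : X → ℝ) : ℝ :=
  (∑ x, p x * (pmfExp ξ f - f x) ^ 2) + (1 / (k : ℝ)) * pmfVar ξ f

/-- Bias–variance decomposition of the mean squared distance from a constant. -/
theorem IsPMF.sum_mul_sub_sq {X : Type*} [Fintype X] {p : X → ℝ} (hp : IsPMF p)
    (f : X → ℝ) (c : ℝ) :
    ∑ x, p x * (c - f x) ^ 2 = (c - pmfExp p f) ^ 2 + pmfVar p f := by
  have expand : ∀ a : ℝ, ∑ x, p x * (f x - a) ^ 2 =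
      ∑ x, p x * f x ^ 2 - 2 * a * pmfExp p f + a ^ 2 := by
    intro a
    calc ∑ x, p x * (f x - a) ^ 2
        = ∑ x, (p x * f x ^ 2 - 2 * a * (p x * f x) + a ^ 2 * p x) :=
          sum_congr rfl fun x _ => by ring
      _ = _ := by
          rw [sum_add_distrib, sum_sub_distrib, ← mul_sum, ← mul_sum, hp.2, mul_one, pmfExp]
  simp_rw [sub_sq_comm c]
  rw [pmfVar, expand, expand]
  ring

/-- A function with zero variance attains its expectation. -/
theorem IsPMF.exists_eq_pmfExp_of_pmfVar_eq_zero {X : Type*} [Fintype X] {q : X → ℝ}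
    (hq : IsPMF q) {f : X → ℝ} (hvar : pmfVar q f = 0) : ∃ x, f x = pmfExp q f := by
  obtain ⟨x, -, hx⟩ : ∃ x ∈ univ, q x ≠ 0 :=
    exists_ne_zero_of_sum_ne_zero (by rw [hq.2]; exact one_ne_zero)
  have hzero := (sum_eq_zero_iff_of_nonneg
    fun y _ => mul_nonneg (hq.1 y) (sq_nonneg (f y - pmfExp q f))).1 hvar x (mem_univ x)
  exact ⟨x, sub_eq_zero.1 (pow_eq_zero_iff two_ne_zero |>.1 ((mul_eq_zero.1 hzero).resolve_left hx))⟩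

/-- If no `x` has `f(x) = E_p[f]`, `p*` is mean-matching, and `q` has zero variance with
`(E_q[f] − E_p[f])² < (1/k)·Var_{p*}(f)`, then `g(q) < g(p*)` and `E_q[f] ≠ E_p[f]`. -/
theorem gLoss_zero_var_beats_mean_matching {X : Type*} [Fintype X]
    (p f : X → ℝ) (hp : IsPMF p) (k : ℕ) (hk : 1 ≤ k)
    (hno : ∀ x : X, f x ≠ pmfExp p f)
    (pstar q : X → ℝ) (hpstar : IsPMF pstar) (hq : IsPMF q)
    (hmean : pmfExp pstar f = pmfExp p f)
    (hqvar : pmfVar q f = 0)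
    (hlt : (pmfExp q f - pmfExp p f) ^ 2 < (1 / (k : ℝ)) * pmfVar pstar f) :
    gLoss p f k q < gLoss p f k pstar ∧ pmfExp q f ≠ pmfExp p f := by
  constructor
  · rw [gLoss, gLoss, hp.sum_mul_sub_sq, hp.sum_mul_sub_sq, hqvar, hmean]
    linarith
  · obtain ⟨x, hx⟩ := hq.exists_eq_pmfExp_of_pmfVar_eq_zero hqvar
    exact hx ▸ hno x
end

section
/- There exist a finite type X, a probability mass function p on X, a function V : X → ℝ, and a family 𝒫 of probability mass functions on X with p ∈ 𝒫, such that every ξ ∈ 𝒫 minimizing the expected single-sample surrogate loss ξ ↦ ∑_x ∑_y ξ(x)·p(y)·(V(x) − V(y))² over 𝒫 satisfies E_ξ[V] ≠ E_p[V]. In other words, the sample-based one-step IterVAML surrogate loss is minimum-uncalibrated: its minimizers over a class containing the true distribution p need not reproduce the true expected value E_p[V]. -/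
open Finset

/-- Expected single-sample one-step IterVAML surrogate loss of the model distribution `ξ`
against the true distribution `p`: `E_{X∼ξ, Y∼p}[(V(X) − V(Y))²]`. -/
noncomputable def itervamlSurrogate {X : Type*} [Fintype X] (p V ξ : X → ℝ) : ℝ :=
  ∑ x, ∑ y, ξ x * p y * (V x - V y) ^ 2

/-- Body of the uncalibratedness statement: `p` is a pmf, `Fam` is a family of pmfs
containing `p`, the surrogate loss attains its minimum over `Fam`, and every minimizer
`ξ ∈ Fam` of the surrogate loss has `E_ξ[V] ≠ E_p[V]`. -/
def ItervamlUncalibratedBody (X : Type) [Fintype X] (p V : X → ℝ)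
    (Fam : Set (X → ℝ)) : Prop :=
  IsPMF p ∧ (∀ ξ ∈ Fam, IsPMF ξ) ∧ p ∈ Fam ∧
  (∃ ξ ∈ Fam, ∀ ξ' ∈ Fam, itervamlSurrogate p V ξ ≤ itervamlSurrogate p V ξ') ∧
  (∀ ξ ∈ Fam, (∀ ξ' ∈ Fam, itervamlSurrogate p V ξ ≤ itervamlSurrogate p V ξ') →
    pmfExp ξ V ≠ pmfExp p V)

/-- The sample-based one-step IterVAML surrogate loss is minimum-uncalibrated: there are
a finite type `X`, a true distribution `p`, a value function `V`, and a class `Fam ∋ p`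
such that every minimizer of the surrogate loss over `Fam` fails to match `E_p[V]`. -/
theorem itervaml_surrogate_uncalibrated :
    ∃ (X : Type) (inst : Fintype X) (p V : X → ℝ) (Fam : Set (X → ℝ)),
      @ItervamlUncalibratedBody X inst p V Fam := by
  refine ⟨Fin 2, inferInstance, ![1 / 4, 3 / 4], ![0, 1], {ξ | IsPMF ξ}, ?_⟩
  have loss (ξ : Fin 2 → ℝ) :
      itervamlSurrogate ![1 / 4, 3 / 4] ![0, 1] ξ = ξ 0 * (3 / 4) + ξ 1 * (1 / 4) := by
    simp [itervamlSurrogate, Fin.sum_univ_two]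
  have hp : IsPMF (![1 / 4, 3 / 4] : Fin 2 → ℝ) := by
    refine ⟨fun x => ?_, ?_⟩
    · fin_cases x <;> norm_num
    · norm_num [Fin.sum_univ_two]
  have hdirac : IsPMF (![0, 1] : Fin 2 → ℝ) := by
    refine ⟨fun x => ?_, ?_⟩
    · fin_cases x <;> norm_num
    · norm_num [Fin.sum_univ_two]
  refine ⟨hp, fun _ h => h, hp, ⟨![0, 1], hdirac, ?_⟩, ?_⟩
  · rintro ξ ⟨hnonneg, hsum⟩
    rw [Fin.sum_univ_two] at hsum
    simp only [loss, Matrix.cons_val_zero, Matrix.cons_val_one]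
    linarith [hnonneg 0]
  · rintro ξ ⟨-, hsum⟩ hmin hexp
    have hle := hmin _ hdirac
    rw [Fin.sum_univ_two] at hsum
    simp only [loss, Matrix.cons_val_zero, Matrix.cons_val_one] at hle
    simp only [pmfExp, Fin.sum_univ_two, Matrix.cons_val_zero, Matrix.cons_val_one] at hexp
    linarith
end

section
/- Let X be a finite type, ξ and p probability mass functions on X, f : X → ℝ, and k ≥ 2 an integer. Let X₁,…,X_k be i.i.d. with law ξ and Y with law p, independent of the X_i. Set μ̂ = (1/k)·∑_{i=1}^k f(X_i) and S² = (1/(k−1))·∑_{i=1}^k (f(X_i) − μ̂)². Then E[(μ̂ − f(Y))² − (1/k)·S²] = (E_ξ[f] − E_p[f])² + Var_p(f). In particular, since Var_p(f) does not depend on ξ, the variance-corrected (CVAML) loss is a calibrated surrogate: its expectation, as a function of the model distribution ξ, is minimized exactly by those ξ with E_ξ[f] = E_p[f]. -/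
open Finset

/-- Expected CVAML loss: for `X₁, …, X_k` i.i.d. with law `ξ` and `Y ∼ p` independent,
`E[(μ̂ − f(Y))² − (1/k)·S²]` where `μ̂ = (1/k)·∑ᵢ f(Xᵢ)` and
`S² = (1/(k−1))·∑ᵢ (f(Xᵢ) − μ̂)²`. -/
noncomputable def cvamlLoss {X : Type*} [Fintype X] (p f : X → ℝ) (k : ℕ)
    (ξ : X → ℝ) : ℝ :=
  ∑ ω : (Fin k → X) × X, ((∏ i, ξ (ω.1 i)) * p ω.2) *
    (((1 / (k : ℝ)) * (∑ i, f (ω.1 i)) - f ω.2) ^ 2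
      - (1 / (k : ℝ)) * ((1 / ((k : ℝ) - 1)) *
          ∑ i, (f (ω.1 i) - (1 / (k : ℝ)) * ∑ j, f (ω.1 j)) ^ 2))

theorem sum_fin_succ_pi {X : Type*} [Fintype X] (k : ℕ) (G : (Fin (k + 1) → X) → ℝ) :
    ∑ ω, G ω = ∑ x, ∑ ω : Fin k → X, G (Fin.cons x ω) := by
  rw [← Fintype.sum_prod_type']
  exact (Fintype.sum_equiv (Fin.consEquiv fun _ => X) _ _ fun _ => rfl).symm

/-- A product of probability mass functions has total mass one. -/
theorem IsPMF.sum_prod {X : Type*} [Fintype X] {ξ : X → ℝ} (hξ : IsPMF ξ) (k : ℕ) :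
    ∑ ω : Fin k → X, ∏ i, ξ (ω i) = 1 := by
  classical
  rw [← Fintype.piFinset_univ, ← Finset.prod_univ_sum]
  simp [hξ.2]

/-- First moment of a sum of i.i.d. samples. -/
theorem IsPMF.sum_prod_mul_sum {X : Type*} [Fintype X] {ξ : X → ℝ} (hξ : IsPMF ξ)
    (f : X → ℝ) (k : ℕ) :
    ∑ ω : Fin k → X, (∏ i, ξ (ω i)) * ∑ i, f (ω i) = k * pmfExp ξ f := by
  induction k with
  | zero => simp
  | succ k ih =>
    rw [sum_fin_succ_pi]
    have key (x : X) : ∑ ω : Fin k → X, (∏ i, ξ ((Fin.cons x ω : Fin (k + 1) → X) i)) *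
        ∑ i, f ((Fin.cons x ω : Fin (k + 1) → X) i)
        = ξ x * f x + ξ x * (k * pmfExp ξ f) := by
      rw [← ih, ← mul_one (ξ x * f x), ← hξ.sum_prod k, mul_sum, mul_sum, ← sum_add_distrib]
      refine sum_congr rfl fun ω _ => ?_
      simp only [Fin.prod_univ_succ, Fin.sum_univ_succ, Fin.cons_zero, Fin.cons_succ]
      ring
    simp only [key, sum_add_distrib, ← sum_mul, hξ.2]
    simp only [pmfExp]
    push_cast
    ring

/-- Second moment of a sum of i.i.d. samples. -/
theorem IsPMF.sum_prod_mul_sum_sq {X : Type*} [Fintype X] {ξ : X → ℝ} (hξ : IsPMF ξ)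
    (f : X → ℝ) (k : ℕ) :
    ∑ ω : Fin k → X, (∏ i, ξ (ω i)) * (∑ i, f (ω i)) ^ 2
      = k * pmfExp ξ (fun x => f x ^ 2) + k * (k - 1) * pmfExp ξ f ^ 2 := by
  induction k with
  | zero => simp
  | succ k ih =>
    rw [sum_fin_succ_pi]
    have key (x : X) : ∑ ω : Fin k → X, (∏ i, ξ ((Fin.cons x ω : Fin (k + 1) → X) i)) *
        (∑ i, f ((Fin.cons x ω : Fin (k + 1) → X) i)) ^ 2
        = ξ x * f x ^ 2 + ξ x * f x * (2 * (k * pmfExp ξ f)) +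
          ξ x * (k * pmfExp ξ (fun x => f x ^ 2) + k * (k - 1) * pmfExp ξ f ^ 2) := by
      rw [← ih, ← hξ.sum_prod_mul_sum, ← mul_one (ξ x * f x ^ 2), ← hξ.sum_prod k]
      simp only [mul_sum (s := (univ : Finset (Fin k → X))), ← sum_add_distrib]
      refine sum_congr rfl fun ω _ => ?_
      simp only [Fin.prod_univ_succ, Fin.sum_univ_succ, Fin.cons_zero, Fin.cons_succ]
      ring
    simp only [key, sum_add_distrib, ← sum_mul, hξ.2]
    simp only [pmfExp]
    push_cast
    ring

theorem sum_sub_mean_sq {k : ℕ} (hk : k ≠ 0) (a : Fin k → ℝ) :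
    ∑ i, (a i - (1 / (k : ℝ)) * ∑ j, a j) ^ 2
      = ∑ i, a i ^ 2 - (1 / (k : ℝ)) * (∑ j, a j) ^ 2 := by
  have hk' : (k : ℝ) ≠ 0 := Nat.cast_ne_zero.mpr hk
  simp only [sub_sq, sum_add_distrib, sum_sub_distrib, ← sum_mul, ← mul_sum, sum_const,
    card_univ, Fintype.card_fin, nsmul_eq_mul]
  field_simp
  ring

theorem IsPMF.pmfVar_eq {X : Type*} [Fintype X] {p : X → ℝ} (hp : IsPMF p) (f : X → ℝ) :
    pmfVar p f = pmfExp p (fun x => f x ^ 2) - pmfExp p f ^ 2 := by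
  have h (x : X) : p x * (f x - pmfExp p f) ^ 2
      = p x * f x ^ 2 - p x * f x * (2 * pmfExp p f) + p x * pmfExp p f ^ 2 := by ring
  simp only [pmfVar, h, sum_add_distrib, sum_sub_distrib, ← sum_mul, hp.2]
  simp only [pmfExp]
  ring

theorem cvamlLoss_eq {X : Type*} [Fintype X] {ξ p : X → ℝ} (hξ : IsPMF ξ) (hp : IsPMF p)
    (f : X → ℝ) {k : ℕ} (hk : 2 ≤ k) :
    cvamlLoss p f k ξ = (pmfExp ξ f - pmfExp p f) ^ 2 + pmfVar p f := by
  have hk0 : (k : ℝ) ≠ 0 := by positivity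
  have hk1 : (k : ℝ) - 1 ≠ 0 := by
    have : (2 : ℝ) ≤ k := by exact_mod_cast hk
    linarith
  have inner (y : X) : ∑ ω : Fin k → X, ((∏ i, ξ (ω i)) * p y) *
      (((1 / (k : ℝ)) * (∑ i, f (ω i)) - f y) ^ 2
        - (1 / (k : ℝ)) * ((1 / ((k : ℝ) - 1)) *
          ∑ i, (f (ω i) - (1 / (k : ℝ)) * ∑ j, f (ω j)) ^ 2))
      = p y * pmfExp ξ f ^ 2 - p y * f y * (2 * pmfExp ξ f) + p y * f y ^ 2 := by
    have expand (ω : Fin k → X) : ((∏ i, ξ (ω i)) * p y) *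
        (((1 / (k : ℝ)) * (∑ i, f (ω i)) - f y) ^ 2
          - (1 / (k : ℝ)) * ((1 / ((k : ℝ) - 1)) *
            ∑ i, (f (ω i) - (1 / (k : ℝ)) * ∑ j, f (ω j)) ^ 2))
        = ((∏ i, ξ (ω i)) * (∑ i, f (ω i)) ^ 2) * (p y / (k * (k - 1)))
          - ((∏ i, ξ (ω i)) * ∑ i, f (ω i) ^ 2) * (p y / (k * (k - 1)))
          - ((∏ i, ξ (ω i)) * ∑ i, f (ω i)) * (2 * p y * f y / k)
          + (∏ i, ξ (ω i)) * (p y * f y ^ 2) := by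
      rw [sum_sub_mean_sq (by omega) fun i => f (ω i)]
      field_simp
      ring
    simp only [expand, sum_add_distrib, sum_sub_distrib, ← sum_mul, hξ.sum_prod_mul_sum_sq,
      hξ.sum_prod_mul_sum, hξ.sum_prod_mul_sum fun x => f x ^ 2, hξ.sum_prod]
    field_simp
    ring
  rw [cvamlLoss, Fintype.sum_prod_type_right]
  simp only [inner, sum_add_distrib, sum_sub_distrib, ← sum_mul, hp.2, hp.pmfVar_eq]
  simp only [pmfExp]
  ring

/-- The variance-corrected (CVAML) loss satisfies
`E[(μ̂ − f(Y))² − (1/k)·S²] = (E_ξ[f] − E_p[f])² + Var_p(f)`; in particular it is a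
calibrated surrogate: its expectation, as a function of the model distribution,
is minimized exactly by the distributions matching the true mean `E_p[f]`. -/
theorem cvaml_calibrated {X : Type*} [Fintype X]
    (ξ p : X → ℝ) (hξ : IsPMF ξ) (hp : IsPMF p)
    (f : X → ℝ) (k : ℕ) (hk : 2 ≤ k) :
    cvamlLoss p f k ξ = (pmfExp ξ f - pmfExp p f) ^ 2 + pmfVar p f
    ∧ (∀ ξ' : X → ℝ, IsPMF ξ' →
        ((∀ ξ'' : X → ℝ, IsPMF ξ'' → cvamlLoss p f k ξ' ≤ cvamlLoss p f k ξ'')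
          ↔ pmfExp ξ' f = pmfExp p f)) := by
  refine ⟨cvamlLoss_eq hξ hp f hk, fun ξ' hξ' => ⟨fun h => ?_, fun h ξ'' hξ'' => ?_⟩⟩
  · have hle := h p hp
    rw [cvamlLoss_eq hξ' hp f hk, cvamlLoss_eq hp hp f hk] at hle
    have hsq : (pmfExp ξ' f - pmfExp p f) ^ 2 = 0 :=
      le_antisymm (by linarith [hle]) (sq_nonneg _)
    exact sub_eq_zero.mp (pow_eq_zero_iff two_ne_zero |>.mp hsq)
  · rw [cvamlLoss_eq hξ' hp f hk, cvamlLoss_eq hξ'' hp f hk, h]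
    linarith [sq_nonneg (pmfExp ξ'' f - pmfExp p f)]
end

section
/- Let X be a finite type, μ a probability mass function on X, and g : X → ℝ with Var_μ(g) > 0. Define L(f) = E_μ[(f − g)²] + E_μ[f·g] − E_μ[f]·E_μ[g] for f : X → ℝ. Then for every ε ∈ ℝ, L((1−ε)·g) − L(g) = ε·(ε·E_μ[g²] − Var_μ(g)); consequently there exists ε > 0 with L((1−ε)·g) < L(g), so there is a finite set of functions ℱ containing g such that g does not minimize L over ℱ. -/
open Finset

/-- The loss `L(f) = E_μ[(f − g)²] + E_μ[f·g] − E_μ[f]·E_μ[g]` (squared error plus the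
covariance of `f` and `g` under `μ`). -/
noncomputable def covLoss {X : Type*} [Fintype X] (μ g f : X → ℝ) : ℝ :=
  pmfExp μ (fun x => (f x - g x) ^ 2)
    + pmfExp μ (fun x => f x * g x) - pmfExp μ f * pmfExp μ g

theorem pmfExp_const_mul {X : Type*} [Fintype X] (μ f : X → ℝ) (c : ℝ) :
    pmfExp μ (fun x => c * f x) = c * pmfExp μ f := by
  simp only [pmfExp, Finset.mul_sum, mul_left_comm]

theorem covLoss_const_mul_self {X : Type*} [Fintype X] (μ g : X → ℝ) (c : ℝ) :
    covLoss μ g (fun x => c * g x)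
      = ((c - 1) ^ 2 + c) * pmfExp μ (fun x => (g x) ^ 2) - c * (pmfExp μ g) ^ 2 := by
  have hsq : (fun x => (c * g x - g x) ^ 2) = fun x => (c - 1) ^ 2 * (g x) ^ 2 := by
    funext x; ring
  have hmul : (fun x => c * g x * g x) = fun x => c * (g x) ^ 2 := by
    funext x; ring
  simp only [covLoss, hsq, hmul, pmfExp_const_mul]
  ring

/-- If `Var_μ(g) = E_μ[g²] − (E_μ[g])² > 0, then for every `ε`,
`L((1−ε)·g) − L(g) = ε·(ε·E_μ[g²] − Var_μ(g))`; consequently some `ε > 0` gives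
`L((1−ε)·g) < L(g)`, so there is a finite set `ℱ ∋ g` of functions over which `g` does
not minimize `L`. -/
theorem covLoss_descent {X : Type*} [Fintype X]
    (μ : X → ℝ) (hμ0 : ∀ x, 0 ≤ μ x) (hμ1 : ∑ x, μ x = 1)
    (g : X → ℝ)
    (hvar : 0 < pmfExp μ (fun x => (g x) ^ 2) - (pmfExp μ g) ^ 2) :
    (∀ ε : ℝ,
      covLoss μ g (fun x => (1 - ε) * g x) - covLoss μ g g
        = ε * (ε * pmfExp μ (fun x => (g x) ^ 2)
            - (pmfExp μ (fun x => (g x) ^ 2) - (pmfExp μ g) ^ 2)))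
    ∧ (∃ ε : ℝ, 0 < ε ∧ covLoss μ g (fun x => (1 - ε) * g x) < covLoss μ g g)
    ∧ (∃ F : Finset (X → ℝ), g ∈ F ∧ ¬ (∀ f ∈ F, covLoss μ g g ≤ covLoss μ g f)) := by
  have hdiff : ∀ ε : ℝ,
      covLoss μ g (fun x => (1 - ε) * g x) - covLoss μ g g
        = ε * (ε * pmfExp μ (fun x => (g x) ^ 2)
            - (pmfExp μ (fun x => (g x) ^ 2) - (pmfExp μ g) ^ 2)) := by
    intro ε
    have hself := covLoss_const_mul_self μ g 1
    simp only [one_mul] at hself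
    rw [covLoss_const_mul_self, hself]
    ring
  have hdescent :
      ∃ ε : ℝ, 0 < ε ∧ covLoss μ g (fun x => (1 - ε) * g x) < covLoss μ g g := by
    have hsq : 0 < pmfExp μ (fun x => (g x) ^ 2) := by
      linarith [sq_nonneg (pmfExp μ g)]
    refine ⟨(pmfExp μ (fun x => (g x) ^ 2) - (pmfExp μ g) ^ 2)
      / (2 * pmfExp μ (fun x => (g x) ^ 2)), by positivity, ?_⟩
    rw [← sub_neg, hdiff]
    refine mul_neg_of_pos_of_neg (by positivity) ?_
    rw [div_mul_eq_mul_div, mul_div_mul_right _ _ hsq.ne']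
    linarith
  refine ⟨hdiff, hdescent, ?_⟩
  classical
  obtain ⟨ε, -, hlt⟩ := hdescent
  exact ⟨{g, fun x => (1 - ε) * g x}, by simp, fun h => (h _ (by simp)).not_gt hlt⟩
end

section
/- Let X be a compact, connected, metrizable topological space, let p be a continuous Markov kernel from X to probability measures on X (i.e., x ↦ p(·|x) is continuous for the topology of weak convergence of probability measures), let Z be a metrizable space, let φ : X → Z be a continuous bijection, and let V : Z → ℝ be continuous. Write V_X = V ∘ φ. Then there exists a Borel-measurable function f* : Z → Z such that V(f*(φ(x))) = ∫ V_X(x') dp(·|x)(x') for all x ∈ X. -/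
open MeasureTheory

/-- A continuous surjection from a compact set of reals onto a Hausdorff space has a
Borel-measurable section, picking the least point of each fibre. -/
theorem IsCompact.exists_measurable_rightInverse {K : Set ℝ} (hK : IsCompact K)
    {Y : Type*} [TopologicalSpace Y] [T2Space Y] [MeasurableSpace Y] [BorelSpace Y]
    {h : K → Y} (hc : Continuous h) (hs : Function.Surjective h) :
    ∃ s : Y → K, Measurable s ∧ Function.RightInverse s h := by
  have : CompactSpace K := isCompact_iff_compactSpace.mp hK
  have hmin (y : Y) : ∃ c ∈ h ⁻¹' {y}, IsMinOn ((↑) : K → ℝ) (h ⁻¹' {y}) c :=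
    (isClosed_singleton.preimage hc).isCompact.exists_isMinOn (hs y)
      continuous_subtype_val.continuousOn
  choose s hsmem hsmin using hmin
  refine ⟨s, ?_, hsmem⟩
  rw [← (MeasurableEmbedding.subtype_coe hK.measurableSet).measurable_comp_iff]
  refine measurable_of_Iic fun a => ?_
  have himage : ((↑) ∘ s : Y → ℝ) ⁻¹' Set.Iic a = h '' {c | (c : ℝ) ≤ a} := by
    ext y
    constructor
    · exact fun hy => ⟨s y, hy, hsmem y⟩
    · rintro ⟨c, hca, rfl⟩
      exact le_trans (isMinOn_iff.mp (hsmin (h c)) c rfl) hca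
  rw [himage]
  have hcl : IsClosed {c : K | (c : ℝ) ≤ a} :=
    isClosed_le continuous_subtype_val continuous_const
  exact (hcl.isCompact.image hc).measurableSet

/-- A continuous surjection from a compact metrizable space onto a Hausdorff space has a
Borel-measurable section. -/
theorem Continuous.exists_measurable_rightInverse {X Y : Type*}
    [TopologicalSpace X] [CompactSpace X] [TopologicalSpace.MetrizableSpace X]
    [MeasurableSpace X] [BorelSpace X]
    [TopologicalSpace Y] [T2Space Y] [MeasurableSpace Y] [BorelSpace Y]
    {f : X → Y} (hf : Continuous f) (hs : Function.Surjective f) :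
    ∃ s : Y → X, Measurable s ∧ Function.RightInverse s f := by
  rcases isEmpty_or_nonempty X with hX | hX
  · have : IsEmpty Y := ⟨fun y => hX.elim (hs y).choose⟩
    exact ⟨isEmptyElim, measurable_of_empty _, isEmptyElim⟩
  let := TopologicalSpace.metrizableSpaceMetric X
  obtain ⟨q, hqc, hqs⟩ := exists_nat_bool_continuous_surjective_of_compact X
  have hgc : Continuous (q ∘ cantorSetHomeomorphNatToBool) :=
    hqc.comp cantorSetHomeomorphNatToBool.continuous
  obtain ⟨s, hsm, hsr⟩ := isCompact_cantorSet.exists_measurable_rightInverse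
    (hf.comp hgc) (hs.comp (hqs.comp cantorSetHomeomorphNatToBool.surjective))
  exact ⟨_, hgc.measurable.comp hsm, hsr⟩

/-- The mean of a continuous real function on a compact connected space is one of its values. -/
theorem Continuous.integral_mem_range {X : Type*}
    [TopologicalSpace X] [CompactSpace X] [ConnectedSpace X]
    [MeasurableSpace X] [OpensMeasurableSpace X]
    {f : X → ℝ} (hf : Continuous f) (μ : Measure X) [IsProbabilityMeasure μ] :
    ∫ x, f x ∂μ ∈ Set.range f :=
  (isPreconnected_range hf).ordConnected.convex.integral_mem (isCompact_range hf).isClosed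
    (Filter.Eventually.of_forall Set.mem_range_self)
    ((BoundedContinuousFunction.mkOfCompact ⟨f, hf⟩).integrable μ)

/-- Deterministic representation: for a compact, connected, metrizable space `X`, a
continuous Markov kernel `p : X → ProbabilityMeasure X` (continuity for the topology of
weak convergence), a continuous bijection `φ : X → Z` into a metrizable space and a
continuous `V : Z → ℝ`, there is a Borel-measurable `f* : Z → Z` with
`V(f*(φ(x))) = ∫ V(φ(x')) dp(·|x)(x')` for all `x`. -/
theorem exists_deterministic_value_equivalent_model
    {X Z : Type*}
    [TopologicalSpace X] [CompactSpace X] [ConnectedSpace X]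
    [TopologicalSpace.MetrizableSpace X]
    [MeasurableSpace X] [BorelSpace X]
    [TopologicalSpace Z] [TopologicalSpace.MetrizableSpace Z]
    [MeasurableSpace Z] [BorelSpace Z]
    (p : X → ProbabilityMeasure X) (hp : Continuous p)
    (φ : X → Z) (hφc : Continuous φ) (hφb : Function.Bijective φ)
    (V : Z → ℝ) (hV : Continuous V) :
    ∃ fstar : Z → Z, Measurable fstar ∧
      ∀ x : X, V (fstar (φ x)) = ∫ x', V (φ x') ∂(p x : Measure X) := by
  have : CompactSpace Z := hφb.surjective.compactSpace hφc
  let e : X ≃ₜ Z := Continuous.homeoOfEquivCompactToT2 (f := Equiv.ofBijective φ hφb) hφc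
  have hVφ : Continuous (V ∘ φ) := hV.comp hφc
  have hmean : Continuous fun x => ∫ x', V (φ x') ∂(p x : Measure X) :=
    continuous_iff_continuousAt.mpr fun x =>
      ProbabilityMeasure.tendsto_iff_forall_integral_tendsto.mp (hp.tendsto x)
        (BoundedContinuousFunction.mkOfCompact ⟨V ∘ φ, hVφ⟩)
  have hmem (x : X) : ∫ x', V (φ x') ∂(p x : Measure X) ∈ Set.range V :=
    Set.range_comp_subset_range φ V (hVφ.integral_mem_range (p x : Measure X))
  obtain ⟨s, hsm, hsr⟩ := hV.rangeFactorization.exists_measurable_rightInverse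
    Set.rangeFactorization_surjective
  refine ⟨fun z => s ⟨_, hmem (e.symm z)⟩,
    hsm.comp ((hmean.comp e.symm.continuous).measurable.subtype_mk), fun x => ?_⟩
  have hx : e.symm (φ x) = x := e.symm_apply_apply x
  simp only [hx]
  exact congrArg Subtype.val (hsr ⟨_, hmem x⟩)
end
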